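/- Let G be a finite simple connected graph on n ≥ 2 vertices. Then q(G) = 2·∑_{v ∈ V(G)} (1 − 1/c(v)) holds if and only if: either ω(G) = 2 and G is a complete bipartite graph, or ω(G) ≥ 3 and G is a complete ω(G)-partite graph all of whose parts have the same size. -/

import Mathlib

open scoped Classical
open Finset

variable {V : Type*}

noncomputable def adjMx [Fintype V] (G : SimpleGraph V) : Matrix V V ℝ :=
  Matrix.of fun u v => if G.Adj u v then 1 else 0

noncomputable def degMx [Fintype V] [DecidableEq V] (G : SimpleGraph V) : Matrix V V ℝ :=
  Matrix.diagonal fun v => ∑ u, if G.Adj v u then (1 : ℝ) else 0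

noncomputable def signlessLap [Fintype V] [DecidableEq V] (G : SimpleGraph V) : Matrix V V ℝ :=
  degMx G + adjMx G

lemma adjMx_isHermitian [Fintype V] (G : SimpleGraph V) : (adjMx G).IsHermitian := by
  ext u v
  simp [adjMx, Matrix.conjTranspose_apply, SimpleGraph.adj_comm]

lemma signlessLap_isHermitian [Fintype V] [DecidableEq V] (G : SimpleGraph V) :
    (signlessLap G).IsHermitian :=
  (Matrix.isHermitian_diagonal _).add (adjMx_isHermitian G)

noncomputable def maxEig [Fintype V] [DecidableEq V] {A : Matrix V V ℝ}
    (hA : A.IsHermitian) : ℝ := ⨆ v, hA.eigenvalues v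

noncomputable def qIndex [Fintype V] [DecidableEq V] (G : SimpleGraph V) : ℝ :=
  maxEig (signlessLap_isHermitian G)

noncomputable def lambda1 [Fintype V] [DecidableEq V] (G : SimpleGraph V) : ℝ :=
  maxEig (adjMx_isHermitian G)

/-- Maximum size of a clique of `G` containing vertex `v`. -/
noncomputable def cliqueAt (G : SimpleGraph V) (v : V) : ℕ :=
  sSup {n | ∃ s : Finset V, G.IsNClique n s ∧ v ∈ s}

/-- Maximum size of a clique of `G` containing both `u` and `v`. -/
noncomputable def cliqueAtEdge (G : SimpleGraph V) (u v : V) : ℕ :=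
  sSup {n | ∃ s : Finset V, G.IsNClique n s ∧ u ∈ s ∧ v ∈ s}

/-!
Let `x` be the positive Perron eigenvector of the signless Laplacian `Q`, and `a v = 1 - 1 / c(v)`.
The form `F w = 2 (∑ w v a v) (∑ w v x v ^ 2) - ∑_{uv ∈ E} w u w v (x u + x v) ^ 2` takes the value
`2 (∑ a v) ‖x‖ ^ 2 - xᵀ Q x` at `w = 1`. It is copositive: moving weight between two nonadjacent
vertices along a direction orthogonal to `a`, as in Motzkin and Straus's proof of Turán's theorem,
reduces to weights supported on a clique, where the inequality is a weighted Cauchy–Schwarz.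
Equality in the bound makes `w = 1` an interior zero, so `F` is positive semidefinite, which forces
nonadjacency to be transitive. In a complete `k`-partite graph the eigenvalue equation determines
the mass of `x` on each part; summing over the parts gives equality in a tangent-line estimate for a
function of the part sizes that is strictly concave for `k ≥ 3`, so the parts are equal.
Conversely, when the degrees of adjacent vertices have a constant sum, the degree vector is a
positive eigenvector, which identifies `q(G)`.
-/

open Matrix

section Perron

variable [Fintype V] {A : Matrix V V ℝ}

lemma pos_of_mulVec_eq_smul (hA : A.IsIrreducible) {μ : ℝ} {x : V → ℝ} (hx : 0 ≤ x)
    (hx₀ : x ≠ 0) (hAx : A *ᵥ x = μ • x) (i : V) : 0 < x i := by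
  refine (hx i).lt_of_ne' fun hi => hx₀ ?_
  have hstep {a b : V} (hab : 0 < A a b) (ha : x a = 0) : x b = 0 := by
    have hsum : ∑ j, A a j * x j = 0 := by
      simpa [ha, mulVec, dotProduct] using congrFun hAx a
    have hterm := (sum_eq_zero_iff_of_nonneg fun j _ => mul_nonneg (hA.nonneg a j) (hx j)).1 hsum
    exact (mul_eq_zero.1 (hterm b (mem_univ b))).resolve_left hab.ne'
  let := toQuiver A
  have hpath {j : V} (p : Quiver.Path i j) : x j = 0 := by
    induction p with
    | nil => exact hi
    | cons _ e ih => exact hstep e.down ih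
  funext j
  obtain ⟨p, -⟩ := hA.connected i j
  exact hpath p

variable [DecidableEq V]

lemma exists_mulVec_eq_maxEig_smul [Nonempty V] (hA : A.IsHermitian) :
    ∃ x : V → ℝ, x ≠ 0 ∧ A *ᵥ x = maxEig hA • x := by
  obtain ⟨i, hi⟩ := exists_eq_ciSup_of_finite (f := hA.eigenvalues)
  refine ⟨hA.eigenvectorBasis i, fun h => ?_, ?_⟩
  · exact hA.eigenvectorBasis.orthonormal.ne_zero i (by ext v; exact congrFun h v)
  · rw [hA.mulVec_eigenvectorBasis, hi, maxEig]

lemma posSemidef_maxEig_smul_one_sub (hA : A.IsHermitian) :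
    (maxEig hA • (1 : Matrix V V ℝ) - A).PosSemidef := by
  refine posSemidef_iff_isHermitian_and_spectrum_nonneg.2
    ⟨(isHermitian_one.smul (IsSelfAdjoint.all _)).sub hA, ?_⟩
  rw [← Algebra.algebraMap_eq_smul_one, ← spectrum.singleton_sub_eq,
    hA.spectrum_real_eq_range_eigenvalues]
  rintro _ ⟨_, rfl, _, ⟨i, rfl⟩, rfl⟩
  exact sub_nonneg.2 (le_ciSup (Finite.bddAbove_range hA.eigenvalues) i)

lemma mulVec_eq_maxEig_smul_of_le (hA : A.IsHermitian) {x : V → ℝ}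
    (hx : maxEig hA * (x ⬝ᵥ x) ≤ x ⬝ᵥ A *ᵥ x) : A *ᵥ x = maxEig hA • x := by
  have hpsd := posSemidef_maxEig_smul_one_sub hA
  have hmul : (maxEig hA • (1 : Matrix V V ℝ) - A) *ᵥ x = maxEig hA • x - A *ᵥ x := by
    rw [sub_mulVec, smul_mulVec, one_mulVec]
  have hzero : star x ⬝ᵥ (maxEig hA • (1 : Matrix V V ℝ) - A) *ᵥ x = 0 := by
    refine le_antisymm ?_ (hpsd.dotProduct_mulVec_nonneg x)
    rw [star_trivial, hmul, dotProduct_sub, dotProduct_smul, smul_eq_mul]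
    linarith
  exact (sub_eq_zero.1 (hmul ▸ (hpsd.dotProduct_mulVec_zero_iff x).1 hzero)).symm

lemma exists_nonneg_mulVec_eq_maxEig_smul [Nonempty V] (hA : A.IsHermitian)
    (hA₀ : ∀ i j, 0 ≤ A i j) : ∃ x : V → ℝ, 0 ≤ x ∧ x ≠ 0 ∧ A *ᵥ x = maxEig hA • x := by
  obtain ⟨x, hx, hAx⟩ := exists_mulVec_eq_maxEig_smul hA
  have habs : |x| ≠ 0 := fun h => hx (funext fun i => abs_eq_zero.1 (congrFun h i))
  refine ⟨|x|, abs_nonneg x, habs, mulVec_eq_maxEig_smul_of_le hA ?_⟩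
  calc maxEig hA * (|x| ⬝ᵥ |x|) = x ⬝ᵥ A *ᵥ x := by
        rw [hAx, dotProduct_smul, smul_eq_mul]; simp [dotProduct]
    _ ≤ |x| ⬝ᵥ A *ᵥ |x| := by
        simp only [dotProduct, mulVec, mul_sum, Pi.abs_apply]
        refine sum_le_sum fun i _ => sum_le_sum fun j _ => (le_abs_self _).trans_eq ?_
        rw [abs_mul, abs_mul, abs_of_nonneg (hA₀ i j)]

lemma exists_pos_mulVec_eq_maxEig_smul [Nonempty V] (hA : A.IsHermitian)
    (hirr : A.IsIrreducible) :
    ∃ x : V → ℝ, (∀ i, 0 < x i) ∧ A *ᵥ x = maxEig hA • x := by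
  obtain ⟨x, hx, hx₀, hAx⟩ := exists_nonneg_mulVec_eq_maxEig_smul hA hirr.nonneg
  exact ⟨x, pos_of_mulVec_eq_smul hirr hx hx₀ hAx, hAx⟩

-- Pairing with a nonnegative eigenvector for the largest eigenvalue identifies the eigenvalue.
lemma maxEig_eq_of_mulVec_eq_smul [Nonempty V] (hA : A.IsHermitian) (hA₀ : ∀ i j, 0 ≤ A i j)
    {μ : ℝ} {x : V → ℝ} (hx : ∀ i, 0 < x i) (hAx : A *ᵥ x = μ • x) : maxEig hA = μ := by
  obtain ⟨y, hy, hy₀, hAy⟩ := exists_nonneg_mulVec_eq_maxEig_smul hA hA₀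
  have hxy : 0 < x ⬝ᵥ y := by
    obtain ⟨i, hi⟩ := Function.ne_iff.1 hy₀
    exact sum_pos' (fun j _ => mul_nonneg (hx j).le (hy j))
      ⟨i, mem_univ i, mul_pos (hx i) ((hy i).lt_of_ne' hi)⟩
  have hswap : x ⬝ᵥ A *ᵥ y = A *ᵥ x ⬝ᵥ y := by
    rw [dotProduct_mulVec, ← mulVec_transpose, ← conjTranspose_eq_transpose_of_trivial, hA.eq]
  rw [hAx, hAy, dotProduct_smul, smul_dotProduct, smul_eq_mul, smul_eq_mul] at hswap
  exact mul_right_cancel₀ hxy.ne' hswap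

end Perron

section Copositive

lemma nonneg_add_smul_single_sub_single [DecidableEq V] {w : V → ℝ} (hw : 0 ≤ w) {u v : V}
    (huv : u ≠ v) {p q : ℝ} (hp : 0 < p) (hq : 0 < q) :
    0 ≤ w + (w v / q) • (Pi.single u p - Pi.single v q) := by
  intro z
  have hv : 0 ≤ w v / q := div_nonneg (hw v) hq.le
  have hz : 0 ≤ w z := hw z
  rcases eq_or_ne z v with rfl | hzv
  · simp [huv.symm, hq.ne']
  rcases eq_or_ne z u with rfl | hzu
  · simpa [hzv] using by positivity
  · simpa [hzv, hzu] using hz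

lemma support_add_smul_single_sub_single_ssubset [DecidableEq V] {w : V → ℝ} {u v : V}
    (hu : w u ≠ 0) (hv : w v ≠ 0) (huv : u ≠ v) (p : ℝ) {q : ℝ} (hq : q ≠ 0) :
    Function.support (w + (w v / q) • (Pi.single u p - Pi.single v q)) ⊂ Function.support w := by
  refine (Set.ssubset_iff_of_subset fun z hz hwz => ?_).2 ⟨v, hv, ?_⟩
  · have hzu : z ≠ u := by rintro rfl; exact hu hwz
    have hzv : z ≠ v := by rintro rfl; exact hv hwz
    simp [hwz, hzu, hzv] at hz
  · simp [huv.symm, hq]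

variable [Fintype V] {M : Matrix V V ℝ}

/-- Copositive matrices: those whose quadratic form is nonnegative on the nonnegative orthant. No
symmetry is required of the matrix. -/
def IsCopositive (M : Matrix V V ℝ) : Prop := ∀ w : V → ℝ, 0 ≤ w → 0 ≤ w ⬝ᵥ M *ᵥ w

lemma dotProduct_mulVec_chord (M : Matrix V V ℝ) (w δ : V → ℝ) (s t : ℝ) :
    t * ((w - s • δ) ⬝ᵥ M *ᵥ (w - s • δ)) + s * ((w + t • δ) ⬝ᵥ M *ᵥ (w + t • δ)) =
      (s + t) * (w ⬝ᵥ M *ᵥ w + s * t * (δ ⬝ᵥ M *ᵥ δ)) := by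
  simp only [mulVec_sub, mulVec_add, mulVec_smul, sub_dotProduct, add_dotProduct, dotProduct_sub,
    dotProduct_add, smul_dotProduct, dotProduct_smul, smul_eq_mul]
  ring

lemma IsCopositive.posSemidef_of_dotProduct_mulVec_eq_zero (hM : IsCopositive M)
    (hherm : M.IsHermitian) {w : V → ℝ} (hw : ∀ v, 0 < w v) (hw₀ : w ⬝ᵥ M *ᵥ w = 0) :
    M.PosSemidef := by
  refine .of_dotProduct_mulVec_nonneg hherm fun δ => ?_
  obtain ⟨t, hsmall, ht⟩ : ∃ t : ℝ, (∀ v, t * |δ v| < w v) ∧ 0 < t := by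
    have hev : ∀ᶠ t : ℝ in nhds 0, ∀ v, t * |δ v| < w v := Filter.eventually_all.2 fun v =>
      (by fun_prop : Continuous fun t : ℝ => t * |δ v|).continuousAt.eventually_lt_const
        (by simpa using hw v)
    exact ((hev.filter_mono nhdsWithin_le_nhds).and self_mem_nhdsWithin).exists
      (f := nhdsWithin 0 (Set.Ioi 0))
  have habs (v : V) : |t * δ v| < w v := by rw [abs_mul, abs_of_pos ht]; exact hsmall v
  have hminus := hM (w - t • δ) fun v => by simpa using (abs_lt.1 (habs v)).2.le
  have hplus := hM (w + t • δ) fun v => by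
    simpa using (neg_lt_iff_pos_add'.1 (abs_lt.1 (habs v)).1).le
  have hchord := dotProduct_mulVec_chord M w δ t t
  rw [hw₀, zero_add, ← mul_assoc] at hchord
  rw [star_trivial]
  exact nonneg_of_mul_nonneg_right (hchord ▸ by positivity) (by positivity : 0 < (t + t) * (t * t))

-- Along the direction `δ` joining two nonadjacent vertices of the support the form is concave, so
-- it is at least a convex combination of its values where one of the two vertices is removed.
lemma isCopositive_of_isClique_support [DecidableEq V] (G : SimpleGraph V)
    (hdir : ∀ u v, u ≠ v → ¬ G.Adj u v → ∃ p q : ℝ, 0 < p ∧ 0 < q ∧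
      (Pi.single u p - Pi.single v q) ⬝ᵥ M *ᵥ (Pi.single u p - Pi.single v q) ≤ 0)
    (hclique : ∀ w : V → ℝ, 0 ≤ w → G.IsClique (Function.support w) → 0 ≤ w ⬝ᵥ M *ᵥ w) :
    IsCopositive M := by
  intro w hw
  induction hn : (Function.support w).ncard using Nat.strong_induction_on generalizing w with
  | _ n ih =>
    by_cases hcl : G.IsClique (Function.support w)
    · exact hclique w hw hcl
    obtain ⟨u, hu, v, hv, huv, hadj⟩ : ∃ u, w u ≠ 0 ∧ ∃ v, w v ≠ 0 ∧ u ≠ v ∧ ¬ G.Adj u v := by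
      simpa [SimpleGraph.IsClique, Set.Pairwise] using hcl
    obtain ⟨p, q, hp, hq, hδ⟩ := hdir u v huv hadj
    set δ : V → ℝ := Pi.single u p - Pi.single v q with hδ_def
    have hs : 0 < w u / p := div_pos ((hw u).lt_of_ne' hu) hp
    have ht : 0 < w v / q := div_pos ((hw v).lt_of_ne' hv) hq
    have hforward : 0 ≤ (w + (w v / q) • δ) ⬝ᵥ M *ᵥ (w + (w v / q) • δ) :=
      ih _ (hn ▸ Set.ncard_lt_ncard
        (support_add_smul_single_sub_single_ssubset hu hv huv p hq.ne'))
        _ (nonneg_add_smul_single_sub_single hw huv hp hq) rfl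
    have hbackward : 0 ≤ (w - (w u / p) • δ) ⬝ᵥ M *ᵥ (w - (w u / p) • δ) := by
      rw [show w - (w u / p) • δ = w + (w u / p) • (Pi.single v q - Pi.single u p) by
        rw [hδ_def]; module]
      exact ih _ (hn ▸ Set.ncard_lt_ncard
        (support_add_smul_single_sub_single_ssubset hv hu huv.symm q hp.ne'))
        _ (nonneg_add_smul_single_sub_single hw huv.symm hq hp) rfl
    have hchord := dotProduct_mulVec_chord M w δ (w u / p) (w v / q)
    have hsum : 0 ≤ w ⬝ᵥ M *ᵥ w + (w u / p) * (w v / q) * (δ ⬝ᵥ M *ᵥ δ) :=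
      nonneg_of_mul_nonneg_right (hchord ▸ by positivity) (add_pos hs ht)
    linarith [mul_nonpos_of_nonneg_of_nonpos (mul_pos hs ht).le hδ]

end Copositive

section WeightedSums

variable {ι : Type*} {s : Finset ι} {w : ι → ℝ}

-- The right-hand side is the excess of the tangent line at `w = W / K` of the concave function on
-- the left.
lemma tangent_sub_div_eq {K W w : ℝ} (hK : K ≠ 0) (hW : W ≠ 0)
    (hden : (1 - 2 / K) * W + 2 * w ≠ 0) :
    (2 / K ^ 2 + (1 - 2 / K) * w / W) - w / ((1 - 2 / K) * W + 2 * w) =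
      2 * (1 - 2 / K) * (w - W / K) ^ 2 / (W * ((1 - 2 / K) * W + 2 * w)) := by
  have hclear : ((1 - 2 / K) * W + 2 * w) *
      (2 / K ^ 2 + (1 - 2 / K) * w / W) - w = 2 * (1 - 2 / K) * (w - W / K) ^ 2 / W := by
    field_simp
    ring
  rw [← div_div, ← hclear, sub_div, mul_div_cancel_left₀ _ hden]

lemma div_le_tangent {K W w : ℝ} (hK : 2 ≤ K) (hW : 0 < W) (hw : 0 < w) :
    w / ((1 - 2 / K) * W + 2 * w) ≤ 2 / K ^ 2 + (1 - 2 / K) * w / W := by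
  have hα : 0 ≤ 1 - 2 / K := sub_nonneg.2 (div_le_one_of_le₀ hK (by linarith))
  rw [← sub_nonneg, tangent_sub_div_eq (by positivity) hW.ne' (by positivity)]
  positivity

lemma sum_tangent {W K : ℝ} (hW : ∑ i ∈ s, w i = W) (hW₀ : W ≠ 0) :
    ∑ i ∈ s, (2 / K ^ 2 + (1 - 2 / K) * w i / W) = #s * (2 / K ^ 2) + (1 - 2 / K) := by
  rw [sum_add_distrib, ← sum_div s fun i => (1 - 2 / K) * w i, ← mul_sum, hW,
    mul_div_cancel_right₀ _ hW₀, sum_const, nsmul_eq_mul]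

lemma sum_div_le_one {K : ℝ} (hw : ∀ i ∈ s, 0 < w i) (hK : 2 ≤ K) (hs : #s ≤ K) :
    ∑ i ∈ s, w i / ((1 - 2 / K) * ∑ j ∈ s, w j + 2 * w i) ≤ 1 := by
  rcases s.eq_empty_or_nonempty with rfl | hne
  · simp
  have hW : 0 < ∑ i ∈ s, w i := sum_pos hw hne
  calc ∑ i ∈ s, w i / ((1 - 2 / K) * ∑ j ∈ s, w j + 2 * w i)
      ≤ ∑ i ∈ s, (2 / K ^ 2 + (1 - 2 / K) * w i / ∑ j ∈ s, w j) :=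
        sum_le_sum fun i hi => div_le_tangent hK hW (hw i hi)
    _ = #s * (2 / K ^ 2) + (1 - 2 / K) := sum_tangent rfl hW.ne'
    _ ≤ K * (2 / K ^ 2) + (1 - 2 / K) := by gcongr
    _ = 1 := by field_simp; ring

lemma eq_sum_div_card_of_sum_div_eq_one (hw : ∀ i ∈ s, 0 < w i) (hs : 2 < #s)
    (hsum : ∑ i ∈ s, w i / ((1 - 2 / (#s : ℝ)) * ∑ j ∈ s, w j + 2 * w i) = 1) {i : ι}
    (hi : i ∈ s) : w i = (∑ j ∈ s, w j) / #s := by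
  have hs' : (2 : ℝ) < #s := by exact_mod_cast hs
  have hW : 0 < ∑ j ∈ s, w j := sum_pos hw ⟨i, hi⟩
  have hα : 0 < 1 - 2 / (#s : ℝ) := sub_pos.2 ((div_lt_one (by linarith)).2 hs')
  have htangent : ∑ i ∈ s, (2 / (#s : ℝ) ^ 2 + (1 - 2 / (#s : ℝ)) * w i / ∑ j ∈ s, w j) = 1 := by
    rw [sum_tangent rfl hW.ne']
    field_simp
    ring
  have heq := (sum_eq_sum_iff_of_le fun j hj => div_le_tangent hs'.le hW (hw j hj)).1
    (hsum.trans htangent.symm) i hi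
  have hwi := hw i hi
  have hexcess := tangent_sub_div_eq (K := #s) (w := w i) (by positivity) hW.ne' (by positivity)
  rw [← heq, sub_self, eq_comm, div_eq_zero_iff, or_iff_left (by positivity), mul_eq_zero,
    or_iff_right (by positivity)] at hexcess
  exact sub_eq_zero.1 (pow_eq_zero_iff two_ne_zero |>.1 hexcess)

lemma sq_sum_mul_le {K : ℝ} (x : ι → ℝ) (hw : ∀ i ∈ s, 0 < w i) (hK : 2 ≤ K) (hs : #s ≤ K) :
    (∑ i ∈ s, w i * x i) ^ 2 ≤
      (1 - 2 / K) * (∑ i ∈ s, w i) * ∑ i ∈ s, w i * x i ^ 2 + 2 * ∑ i ∈ s, (w i * x i) ^ 2 := by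
  set W := ∑ i ∈ s, w i
  have hα : 0 ≤ 1 - 2 / K := sub_nonneg.2 (div_le_one_of_le₀ hK (by linarith))
  have hden : ∀ i ∈ s, 0 < (1 - 2 / K) * W + 2 * w i := fun i hi => by
    have hW : 0 ≤ W := sum_nonneg fun j hj => (hw j hj).le
    have hwi := hw i hi
    positivity
  have hone : ∑ i ∈ s, w i / ((1 - 2 / K) * W + 2 * w i) ≤ 1 := sum_div_le_one hw hK hs
  clear_value W
  have hright : ∀ i ∈ s, 0 ≤ w i * x i ^ 2 * ((1 - 2 / K) * W + 2 * w i) := fun i hi =>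
    mul_nonneg (mul_nonneg (hw i hi).le (sq_nonneg _)) (hden i hi).le
  calc (∑ i ∈ s, w i * x i) ^ 2
      ≤ (∑ i ∈ s, w i / ((1 - 2 / K) * W + 2 * w i)) *
          ∑ i ∈ s, w i * x i ^ 2 * ((1 - 2 / K) * W + 2 * w i) :=
        sum_sq_le_sum_mul_sum_of_sq_le_mul s (fun i hi => div_nonneg (hw i hi).le (hden i hi).le)
          hright fun i hi => by
            have hi₀ := (hden i hi).ne'
            rw [div_mul_eq_mul_div, ← mul_assoc, mul_div_cancel_right₀ _ hi₀]
            exact le_of_eq (by ring)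
    _ ≤ ∑ i ∈ s, w i * x i ^ 2 * ((1 - 2 / K) * W + 2 * w i) :=
        mul_le_of_le_one_left (sum_nonneg hright) hone
    _ = (1 - 2 / K) * W * ∑ i ∈ s, w i * x i ^ 2 + 2 * ∑ i ∈ s, (w i * x i) ^ 2 := by
        rw [mul_sum, mul_sum, ← sum_add_distrib]
        exact sum_congr rfl fun i _ => by ring

end WeightedSums

section CliqueWeight

lemma card_le_cliqueAt [Finite V] {G : SimpleGraph V} {s : Finset V} {v : V}
    (hs : G.IsClique s) (hv : v ∈ s) : #s ≤ cliqueAt G v := by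
  have := Fintype.ofFinite V
  refine le_csSup ⟨Fintype.card V, ?_⟩ ⟨s, ⟨hs, rfl⟩, hv⟩
  rintro _ ⟨t, ht, -⟩
  exact ht.card_eq ▸ t.card_le_univ

lemma cliqueAt_le_cliqueNum [Finite V] (G : SimpleGraph V) (v : V) :
    cliqueAt G v ≤ G.cliqueNum := by
  refine csSup_le ⟨1, {v}, by simp [SimpleGraph.isNClique_iff]⟩ ?_
  rintro _ ⟨s, hs, -⟩
  exact hs.card_eq ▸ hs.isClique.card_le_cliqueNum

lemma two_le_cliqueAt [Finite V] {G : SimpleGraph V} {u v : V} (huv : G.Adj u v) :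
    2 ≤ cliqueAt G u := by
  rw [← card_pair huv.ne]
  exact card_le_cliqueAt (by simp [huv]) (mem_insert_self u {v})

lemma two_le_cliqueNum [Finite V] {G : SimpleGraph V} {u v : V} (huv : G.Adj u v) :
    2 ≤ G.cliqueNum :=
  (two_le_cliqueAt huv).trans (cliqueAt_le_cliqueNum G u)

/-- The weight `1 - 1 / c(v)` that a vertex contributes to the localized bound on `q(G)`. -/
noncomputable def cliqueWeight (G : SimpleGraph V) (v : V) : ℝ := 1 - 1 / (cliqueAt G v : ℝ)

lemma one_sub_one_div_le_cliqueWeight {G : SimpleGraph V} {v : V} {K : ℝ} (hK : 0 < K)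
    (hv : K ≤ cliqueAt G v) : 1 - 1 / K ≤ cliqueWeight G v :=
  sub_le_sub_left (one_div_le_one_div_of_le hK hv) 1

lemma cliqueWeight_pos [Finite V] {G : SimpleGraph V} {u v : V} (huv : G.Adj u v) :
    0 < cliqueWeight G u := by
  have h : (2 : ℝ) ≤ cliqueAt G u := by exact_mod_cast two_le_cliqueAt huv
  linarith [one_sub_one_div_le_cliqueWeight two_pos h]

end CliqueWeight

section GapMatrix

/-- The matrix with entry `(x u + x v) ^ 2 / 2` at each edge `uv` and `0` elsewhere; its total sum
is the value at `x` of the signless Laplacian form. -/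
noncomputable def edgeMatrix (G : SimpleGraph V) (x : V → ℝ) : Matrix V V ℝ :=
  Matrix.of fun u v => if G.Adj u v then (x u + x v) ^ 2 / 2 else 0

/-- The matrix whose form `w ↦ 2 (∑ w v a v) (∑ w v x v ^ 2) - ∑ w u w v (edgeMatrix G x) u v`,
with `a` the clique weights, measures at `w = 1` by how much the localized bound on `q(G)` exceeds
the Rayleigh quotient of `x`. -/
noncomputable def gapMatrix (G : SimpleGraph V) (x : V → ℝ) : Matrix V V ℝ :=
  vecMulVec (cliqueWeight G) (x ^ 2) + vecMulVec (x ^ 2) (cliqueWeight G) - edgeMatrix G x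

lemma gapMatrix_isHermitian (G : SimpleGraph V) (x : V → ℝ) : (gapMatrix G x).IsHermitian := by
  refine Matrix.IsHermitian.ext fun u v => ?_
  simp only [gapMatrix, edgeMatrix, vecMulVec_apply, Matrix.sub_apply, Matrix.add_apply,
    Matrix.of_apply, G.adj_comm v u, add_comm (x v) (x u), star_trivial]
  ring

variable [Fintype V]

lemma dotProduct_gapMatrix_mulVec (G : SimpleGraph V) (x w : V → ℝ) :
    w ⬝ᵥ gapMatrix G x *ᵥ w =
      2 * (w ⬝ᵥ cliqueWeight G) * (w ⬝ᵥ x ^ 2) - w ⬝ᵥ edgeMatrix G x *ᵥ w := by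
  simp only [gapMatrix, sub_mulVec, add_mulVec, vecMulVec_mulVec, dotProduct_sub, dotProduct_add,
    op_smul_eq_smul, dotProduct_smul, smul_eq_mul, dotProduct_comm _ w]
  ring

-- On a clique all pairs `u ≠ v` are edges; the subtracted term removes the diagonal `u = v`.
lemma dotProduct_edgeMatrix_mulVec_of_isClique_support {G : SimpleGraph V} {w : V → ℝ}
    (hw : G.IsClique (Function.support w)) (x : V → ℝ) :
    w ⬝ᵥ edgeMatrix G x *ᵥ w =
      (∑ v, w v) * (∑ v, w v * x v ^ 2) + (∑ v, w v * x v) ^ 2 - 2 * ∑ v, (w v * x v) ^ 2 := by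
  have hentry (u v : V) : w u * (edgeMatrix G x u v * w v) =
      w u * w v * ((x u + x v) ^ 2 / 2) - if u = v then 2 * (w u * x u) ^ 2 else 0 := by
    by_cases huv : u = v
    · subst huv
      simp only [edgeMatrix, Matrix.of_apply, SimpleGraph.irrefl, if_false, if_true]
      ring
    · by_cases hu : w u = 0
      · simp [hu, huv]
      by_cases hv : w v = 0
      · simp [hv, huv]
      · simp only [edgeMatrix, Matrix.of_apply, hw hu hv huv, huv, if_true, if_false]
        ring
  have hform : w ⬝ᵥ edgeMatrix G x *ᵥ w =
      ∑ u, ∑ v, w u * w v * ((x u + x v) ^ 2 / 2) - ∑ v, 2 * (w v * x v) ^ 2 := by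
    simp only [dotProduct, mulVec, mul_sum, hentry, sum_sub_distrib, sum_ite_eq, mem_univ, if_true]
  rw [hform, ← mul_sum univ _ (2 : ℝ), sq (∑ v, w v * x v), sum_mul_sum, sum_mul_sum]
  congr 1
  have hsymm : ∑ u, ∑ v, w u * w v * (x u ^ 2 / 2) = ∑ u, ∑ v, w u * w v * (x v ^ 2 / 2) := by
    rw [sum_comm]
    exact sum_congr rfl fun u _ => sum_congr rfl fun v _ => by ring
  calc ∑ u, ∑ v, w u * w v * ((x u + x v) ^ 2 / 2)
      = ∑ u, ∑ v, w u * w v * (x u ^ 2 / 2) + ∑ u, ∑ v, w u * w v * (x v ^ 2 / 2) +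
          ∑ u, ∑ v, w u * x u * (w v * x v) := by
        simp only [← sum_add_distrib]
        exact sum_congr rfl fun u _ => sum_congr rfl fun v _ => by ring
    _ = ∑ u, ∑ v, w u * (w v * x v ^ 2) + ∑ u, ∑ v, w u * x u * (w v * x v) := by
        rw [hsymm]
        simp only [← sum_add_distrib]
        exact sum_congr rfl fun u _ => sum_congr rfl fun v _ => by ring

lemma dotProduct_gapMatrix_mulVec_nonneg_of_isClique_support {G : SimpleGraph V}
    (hG : ∀ v, ∃ u, G.Adj v u) (x : V → ℝ) {w : V → ℝ} (hw : 0 ≤ w)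
    (hclique : G.IsClique (Function.support w)) : 0 ≤ w ⬝ᵥ gapMatrix G x *ᵥ w := by
  set S : Finset V := {v | w v ≠ 0} with hS
  have hsupp {y : V → ℝ} (hy : ∀ v, w v = 0 → y v = 0) : ∑ v ∈ S, y v = ∑ v, y v :=
    sum_filter_of_ne fun v _ h hv => h (hy v hv)
  have hpos : ∀ v ∈ S, 0 < w v := fun v hv => (hw v).lt_of_ne' (mem_filter.1 hv).2
  have hScl : G.IsClique (S : Set V) := by simpa [hS, Function.support] using hclique
  set K : ℝ := max #S 2
  have hK : 0 < K := two_pos.trans_le (le_max_right _ _)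
  have hweight : (1 - 1 / K) * ∑ v, w v ≤ w ⬝ᵥ cliqueWeight G := by
    rw [dotProduct, ← hsupp fun v hv => hv, ← hsupp fun v hv => by rw [hv, zero_mul], mul_sum]
    refine sum_le_sum fun v hv => (mul_comm _ _).trans_le
      (mul_le_mul_of_nonneg_left (one_sub_one_div_le_cliqueWeight hK (max_le ?_ ?_)) (hw v))
    · exact_mod_cast card_le_cliqueAt hScl hv
    · exact_mod_cast two_le_cliqueAt (hG v).choose_spec
  have hcauchy : (∑ v, w v * x v) ^ 2 ≤
      (1 - 2 / K) * (∑ v, w v) * (w ⬝ᵥ x ^ 2) + 2 * ∑ v, (w v * x v) ^ 2 := by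
    have h := sq_sum_mul_le x hpos (le_max_right _ _) (le_max_left _ _ : (#S : ℝ) ≤ K)
    rwa [hsupp fun v hv => hv, hsupp fun v hv => by rw [hv, zero_mul],
      hsupp fun v hv => by rw [hv, zero_mul], hsupp fun v hv => by rw [hv, zero_mul, sq, zero_mul]]
      at h
  have hnonneg : 0 ≤ w ⬝ᵥ x ^ 2 := dotProduct_nonneg_of_nonneg hw fun v => sq_nonneg (x v)
  rw [dotProduct_gapMatrix_mulVec, dotProduct_edgeMatrix_mulVec_of_isClique_support hclique,
    sub_nonneg]
  calc (∑ v, w v) * (w ⬝ᵥ x ^ 2) + (∑ v, w v * x v) ^ 2 - 2 * ∑ v, (w v * x v) ^ 2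
      ≤ 2 * ((1 - 1 / K) * ∑ v, w v) * (w ⬝ᵥ x ^ 2) := by
        have hK₂ : 2 * (1 - 1 / K) = 1 + (1 - 2 / K) := by ring
        linear_combination hcauchy - (∑ v, w v) * (w ⬝ᵥ x ^ 2) * hK₂
    _ ≤ 2 * (w ⬝ᵥ cliqueWeight G) * (w ⬝ᵥ x ^ 2) := by gcongr

lemma isCopositive_gapMatrix {G : SimpleGraph V} (hG : ∀ v, ∃ u, G.Adj v u) (x : V → ℝ) :
    IsCopositive (gapMatrix G x) := by
  refine isCopositive_of_isClique_support G (fun u v _ hadj => ?_) fun w hw hclique =>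
    dotProduct_gapMatrix_mulVec_nonneg_of_isClique_support hG x hw hclique
  refine ⟨cliqueWeight G v, cliqueWeight G u, cliqueWeight_pos (hG v).choose_spec,
    cliqueWeight_pos (hG u).choose_spec, le_of_eq ?_⟩
  rw [dotProduct_gapMatrix_mulVec]
  simp [sub_dotProduct, mulVec_sub, edgeMatrix, hadj, G.adj_comm v u, mul_comm]

end GapMatrix

lemma isCompleteMultipartite_of_posSemidef_gapMatrix [Finite V] {G : SimpleGraph V}
    (hG : ∀ v, ∃ u, G.Adj v u) {x : V → ℝ} (hx : ∀ v, 0 < x v)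
    (hpsd : (gapMatrix G x).PosSemidef) : G.IsCompleteMultipartite := by
  have := Fintype.ofFinite V
  refine ⟨fun u v z huv hvz huz => ?_⟩
  set a := cliqueWeight G
  have ha : 0 < a v := cliqueWeight_pos (hG v).choose_spec
  -- Along `δ`, orthogonal to `a`, the form only sees the edge `uz`, with the wrong sign.
  set δ : V → ℝ := Pi.single u (a v) + Pi.single z (a v) - Pi.single v (a u + a z) with hδ
  have hδa : δ ⬝ᵥ a = 0 := by
    simp only [hδ, sub_dotProduct, add_dotProduct, single_dotProduct]
    ring
  have hedge : δ ⬝ᵥ edgeMatrix G x *ᵥ δ = (a v * (x u + x z)) ^ 2 := by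
    simp only [hδ, edgeMatrix, mulVec_sub, mulVec_add, mulVec_single, op_smul_eq_smul,
      MulOpposite.op_add, dotProduct_sub, dotProduct_add, dotProduct_smul, sub_dotProduct,
      add_dotProduct, single_dotProduct, col_apply, of_apply, SimpleGraph.irrefl, if_false, if_true,
      mul_zero, huz.symm, zero_add, G.adj_comm v u, huv, sub_zero, smul_eq_mul, huz, add_zero, hvz,
      G.adj_comm z v, sub_self, smul_zero]
    ring
  have hnonneg := hpsd.dotProduct_mulVec_nonneg δ
  rw [star_trivial, dotProduct_gapMatrix_mulVec, hδa, hedge] at hnonneg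
  have hpos : 0 < (a v * (x u + x z)) ^ 2 := pow_pos (mul_pos ha (add_pos (hx u) (hx z))) 2
  linarith

section SignlessLaplacian

variable [Fintype V] [DecidableEq V]

lemma signlessLap_mulVec_apply (G : SimpleGraph V) (x : V → ℝ) (u : V) :
    (signlessLap G *ᵥ x) u = ∑ v ∈ G.neighborFinset u, (x u + x v) := by
  rw [signlessLap, add_mulVec, Pi.add_apply, degMx, mulVec_diagonal, G.neighborFinset_eq_filter,
    sum_filter]
  simp only [adjMx, mulVec, dotProduct, Matrix.of_apply, sum_mul, ← sum_add_distrib]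
  exact sum_congr rfl fun v _ => by split_ifs <;> ring

lemma signlessLap_mulVec_degree (G : SimpleGraph V) {r : ℝ}
    (hr : ∀ u v, G.Adj u v → (G.degree u : ℝ) + G.degree v = r) :
    (signlessLap G *ᵥ fun v => (G.degree v : ℝ)) = r • fun v => (G.degree v : ℝ) := by
  funext u
  rw [signlessLap_mulVec_apply, sum_congr rfl fun v hv => hr u v ((G.mem_neighborFinset u v).1 hv),
    sum_const, G.card_neighborFinset_eq_degree, nsmul_eq_mul, mul_comm]
  rfl

lemma signlessLap_apply_nonneg (G : SimpleGraph V) (u v : V) : 0 ≤ signlessLap G u v := by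
  refine add_nonneg ?_ ?_
  · rw [degMx, Matrix.diagonal_apply]
    split_ifs
    · exact sum_nonneg fun _ _ => by split_ifs <;> simp
    · rfl
  · rw [adjMx, Matrix.of_apply]
    split_ifs <;> simp

lemma signlessLap_apply_of_adj {G : SimpleGraph V} {u v : V} (huv : G.Adj u v) :
    signlessLap G u v = 1 := by
  simp [signlessLap, degMx, adjMx, huv, huv.ne]

lemma signlessLap_isIrreducible [Nontrivial V] {G : SimpleGraph V} (hG : G.Connected) :
    (signlessLap G).IsIrreducible := by
  let := toQuiver (signlessLap G)
  have hom {u v : V} (huv : G.Adj u v) : u ⟶ v :=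
    ⟨(signlessLap_apply_of_adj huv).symm ▸ one_pos⟩
  refine ⟨signlessLap_apply_nonneg G, fun u v => ?_⟩
  obtain ⟨u', hu'⟩ := hG.preconnected.exists_adj_of_nontrivial u
  obtain ⟨p⟩ := hG.preconnected u' v
  have hpath {a b : V} (p : G.Walk a b) : Nonempty (Quiver.Path a b) := by
    induction p with
    | nil => exact ⟨.nil⟩
    | cons h _ ih => exact ih.map (hom h).toPath.comp
  obtain ⟨q⟩ := hpath p
  exact ⟨(hom hu').toPath.comp q, by simp⟩

lemma exists_pos_signlessLap_mulVec_eq_qIndex_smul [Nontrivial V] {G : SimpleGraph V}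
    (hG : G.Connected) : ∃ x : V → ℝ, (∀ v, 0 < x v) ∧ signlessLap G *ᵥ x = qIndex G • x :=
  exists_pos_mulVec_eq_maxEig_smul (signlessLap_isHermitian G) (signlessLap_isIrreducible hG)

lemma qIndex_eq_of_degree_add_degree [Nonempty V] {G : SimpleGraph V} {r : ℝ}
    (hG : ∀ v, 0 < G.degree v) (hr : ∀ u v, G.Adj u v → (G.degree u : ℝ) + G.degree v = r) :
    qIndex G = r :=
  maxEig_eq_of_mulVec_eq_smul _ (signlessLap_apply_nonneg G)
    (fun v => Nat.cast_pos.2 (hG v)) (signlessLap_mulVec_degree G hr)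

lemma one_dotProduct_edgeMatrix_mulVec_one (G : SimpleGraph V) (x : V → ℝ) :
    1 ⬝ᵥ edgeMatrix G x *ᵥ 1 = x ⬝ᵥ signlessLap G *ᵥ x := by
  have hsymm : ∑ u, ∑ v, (if G.Adj u v then x u * (x u + x v) else 0) =
      ∑ u, ∑ v, if G.Adj u v then x v * (x u + x v) else 0 := by
    rw [sum_comm]
    exact sum_congr rfl fun u _ => sum_congr rfl fun v _ => by rw [G.adj_comm, add_comm]
  have hquad : x ⬝ᵥ signlessLap G *ᵥ x =
      ∑ u, ∑ v, if G.Adj u v then x u * (x u + x v) else 0 := by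
    simp only [dotProduct, signlessLap_mulVec_apply, G.neighborFinset_eq_filter, sum_filter,
      mul_sum,  mul_ite, mul_zero]
  calc 1 ⬝ᵥ edgeMatrix G x *ᵥ 1
      = ∑ u, ∑ v, if G.Adj u v then (x u + x v) ^ 2 / 2 else 0 := by
        simp only [dotProduct, mulVec, edgeMatrix, Matrix.of_apply, Pi.one_apply, one_mul, mul_one]
    _ = (∑ u, ∑ v, (if G.Adj u v then x u * (x u + x v) else 0) +
          ∑ u, ∑ v, if G.Adj u v then x v * (x u + x v) else 0) / 2 := by
        simp only [← sum_add_distrib, sum_div]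
        exact sum_congr rfl fun u _ => sum_congr rfl fun v _ => by split_ifs <;> ring
    _ = x ⬝ᵥ signlessLap G *ᵥ x := by rw [← hsymm, hquad, add_self_div_two]

lemma one_dotProduct_gapMatrix_mulVec_one (G : SimpleGraph V) (x : V → ℝ) :
    1 ⬝ᵥ gapMatrix G x *ᵥ 1 =
      2 * (∑ v, cliqueWeight G v) * (x ⬝ᵥ x) - x ⬝ᵥ signlessLap G *ᵥ x := by
  rw [dotProduct_gapMatrix_mulVec, one_dotProduct_edgeMatrix_mulVec_one]
  simp [dotProduct, sq]

lemma isCompleteMultipartite_of_mulVec_eq_smul {G : SimpleGraph V} (hG : ∀ v, ∃ u, G.Adj v u)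
    {x : V → ℝ} (hx : ∀ v, 0 < x v)
    (hQx : signlessLap G *ᵥ x = (2 * ∑ v, cliqueWeight G v) • x) : G.IsCompleteMultipartite := by
  have hzero : 1 ⬝ᵥ gapMatrix G x *ᵥ 1 = 0 := by
    rw [one_dotProduct_gapMatrix_mulVec_one, hQx, dotProduct_smul, smul_eq_mul, sub_self]
  exact isCompleteMultipartite_of_posSemidef_gapMatrix hG hx
    ((isCopositive_gapMatrix hG x).posSemidef_of_dotProduct_mulVec_eq_zero
      (gapMatrix_isHermitian G x) (fun _ => one_pos) hzero)

end SignlessLaplacian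

section Fibers

variable [Fintype V] {ι : Type*} [DecidableEq ι] {G : SimpleGraph V} {f : V → ι}

lemma card_fiber_pos (hf : Function.Surjective f) (i : ι) : 0 < #{v | f v = i} := by
  obtain ⟨v, rfl⟩ := hf i
  exact card_pos.2 ⟨v, by simp⟩

lemma neighborFinset_eq_compl_fiber [DecidableEq V] (hadj : ∀ u v, G.Adj u v ↔ f u ≠ f v)
    (v : V) : G.neighborFinset v = ({u | f u = f v} : Finset V)ᶜ := by
  ext u
  simp [hadj, eq_comm]

lemma degree_eq_card_sub_card_fiber (hadj : ∀ u v, G.Adj u v ↔ f u ≠ f v) (v : V) :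
    (G.degree v : ℝ) = Fintype.card V - #{u | f u = f v} := by
  rw [← G.card_neighborFinset_eq_degree, neighborFinset_eq_compl_fiber hadj, card_compl,
    Nat.cast_sub (card_le_univ _)]

lemma signlessLap_mulVec_apply_of_adj_iff_ne [DecidableEq V] (hadj : ∀ u v, G.Adj u v ↔ f u ≠ f v)
    (x : V → ℝ) (v : V) : (signlessLap G *ᵥ x) v =
      (Fintype.card V - #{u | f u = f v}) * x v + (∑ u, x u - ∑ u with f u = f v, x u) := by
  rw [signlessLap_mulVec_apply, sum_add_distrib, sum_const, nsmul_eq_mul,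
    G.card_neighborFinset_eq_degree, degree_eq_card_sub_card_fiber hadj,
    neighborFinset_eq_compl_fiber hadj, eq_sub_of_add_eq' (sum_add_sum_compl _ x)]

lemma sum_fiber_mul_eq [DecidableEq V] (hadj : ∀ u v, G.Adj u v ↔ f u ≠ f v) {x : V → ℝ} {μ : ℝ}
    (hx : signlessLap G *ᵥ x = μ • x) (i : ι) :
    (∑ v with f v = i, x v) * (μ - Fintype.card V + 2 * #{v | f v = i}) =
      #{v | f v = i} * ∑ v, x v := by
  have hfiber : ∑ v with f v = i, μ * x v =
      ∑ v with f v = i, ((Fintype.card V - #{u | f u = i}) * x v +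
        (∑ u, x u - ∑ u with f u = i, x u)) := by
    refine sum_congr rfl fun v hv => ?_
    rw [← smul_eq_mul, ← Pi.smul_apply, ← hx, signlessLap_mulVec_apply_of_adj_iff_ne hadj,
      (mem_filter.1 hv).2]
  rw [← mul_sum, sum_add_distrib, ← mul_sum, sum_const, nsmul_eq_mul] at hfiber
  linear_combination hfiber

end Fibers

section CompleteMultipartite

variable {ι : Type*} [Fintype ι] {G : SimpleGraph V} {f : V → ι}

lemma card_le_of_isClique (hadj : ∀ u v, G.Adj u v → f u ≠ f v) {s : Finset V}
    (hs : G.IsClique s) : #s ≤ Fintype.card ι :=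
  card_le_card_of_injOn f (fun _ _ => mem_univ _) fun u hu v hv huv =>
    by_contra fun hne => hadj u v (hs hu hv hne) huv

lemma cliqueAt_eq_card [Finite V] (hf : Function.Surjective f)
    (hadj : ∀ u v, G.Adj u v ↔ f u ≠ f v) (v : V) : cliqueAt G v = Fintype.card ι := by
  refine le_antisymm (csSup_le ⟨1, {v}, by simp [SimpleGraph.isNClique_iff]⟩ ?_) ?_
  · rintro _ ⟨s, hs, -⟩
    exact hs.card_eq ▸ card_le_of_isClique (fun u v => (hadj u v).1) hs.isClique
  set g : ι → V := Function.update (Function.surjInv hf) (f v) v with hg_def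
  have hg : Function.LeftInverse f g := fun i => by
    rcases eq_or_ne i (f v) with rfl | hi
    · rw [hg_def, Function.update_self]
    · rw [hg_def, Function.update_of_ne hi, Function.surjInv_eq hf]
  rw [← Finset.card_univ, ← card_image_of_injective univ hg.injective]
  refine card_le_cliqueAt ?_ (mem_image.2 ⟨f v, mem_univ _, Function.update_self ..⟩)
  rw [coe_image, coe_univ, Set.image_univ]
  rintro _ ⟨i, rfl⟩ _ ⟨j, rfl⟩ hij
  rw [hadj, hg, hg]
  exact fun h => hij (congrArg g h)

lemma cliqueNum_eq_card [Finite V] [Nonempty V] (hf : Function.Surjective f)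
    (hadj : ∀ u v, G.Adj u v ↔ f u ≠ f v) : G.cliqueNum = Fintype.card ι := by
  obtain ⟨s, hs⟩ := G.exists_isNClique_cliqueNum
  obtain ⟨v⟩ := ‹Nonempty V›
  exact le_antisymm (hs.card_eq ▸ card_le_of_isClique (fun u v => (hadj u v).1) hs.isClique)
    (cliqueAt_eq_card hf hadj v ▸ cliqueAt_le_cliqueNum G v)

lemma exists_surjective_adj_iff_ne [Finite V] [Nonempty V] (hG : G.IsCompleteMultipartite) :
    ∃ f : V → Fin G.cliqueNum, Function.Surjective f ∧ ∀ u v, G.Adj u v ↔ f u ≠ f v := by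
  have := Fintype.ofFinite (Quotient hG.setoid)
  have hadj (u v : V) : G.Adj u v ↔ Quotient.mk hG.setoid u ≠ Quotient.mk hG.setoid v := by
    rw [ne_eq, Quotient.eq]
    exact not_not.symm
  let e := Fintype.equivFinOfCardEq (cliqueNum_eq_card Quotient.mk_surjective hadj).symm
  exact ⟨e ∘ Quotient.mk _, e.surjective.comp Quotient.mk_surjective, fun u v =>
    (hadj u v).trans e.injective.ne_iff.symm⟩

variable [Fintype V]

lemma two_mul_sum_cliqueWeight (hf : Function.Surjective f)
    (hadj : ∀ u v, G.Adj u v ↔ f u ≠ f v) :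
    2 * ∑ v, cliqueWeight G v = 2 * Fintype.card V * (1 - 1 / (Fintype.card ι : ℝ)) := by
  simp only [cliqueWeight, cliqueAt_eq_card hf hadj, sum_const, Finset.card_univ, nsmul_eq_mul,
    mul_assoc]

variable [DecidableEq ι]

lemma sum_card_fiber (f : V → ι) : ∑ i, (#{v | f v = i} : ℝ) = Fintype.card V := by
  exact_mod_cast (card_eq_sum_card_fiberwise fun v _ => mem_univ (f v)).symm

lemma card_fiber_add_card_fiber_of_card_eq_two (hι : Fintype.card ι = 2) (f : V → ι) {i j : ι}
    (hij : i ≠ j) :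
    (#{v | f v = i} : ℝ) + #{v | f v = j} = 2 * Fintype.card V / Fintype.card ι := by
  have huniv : ({i, j} : Finset ι) = univ :=
    eq_univ_of_card _ ((card_pair hij).trans hι.symm)
  rw [← sum_card_fiber f, ← huniv, sum_pair hij, hι]
  ring

lemma card_fiber_eq_of_forall_card_fiber_eq {f : V → ι}
    (heq : ∀ i j, #{v | f v = i} = #{v | f v = j}) (i : ι) :
    (#{v | f v = i} : ℝ) = Fintype.card V / Fintype.card ι := by
  have : Nonempty ι := ⟨i⟩
  rw [eq_div_iff (by positivity), ← sum_card_fiber f, sum_congr rfl fun j _ => by rw [heq j i],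
    sum_const, Finset.card_univ, nsmul_eq_mul, mul_comm]

variable [DecidableEq V]

lemma qIndex_eq_of_card_fiber_add_card_fiber [Nontrivial ι] (hf : Function.Surjective f)
    (hadj : ∀ u v, G.Adj u v ↔ f u ≠ f v)
    (hcard : ∀ i j, i ≠ j →
      (#{v | f v = i} : ℝ) + #{v | f v = j} = 2 * Fintype.card V / Fintype.card ι) :
    qIndex G = 2 * ∑ v, cliqueWeight G v := by
  have : Nonempty V := hf.nonempty
  rw [two_mul_sum_cliqueWeight hf hadj]
  refine qIndex_eq_of_degree_add_degree (fun v => ?_) fun u v huv => ?_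
  · obtain ⟨i, hi⟩ := exists_ne (f v)
    obtain ⟨u, rfl⟩ := hf i
    exact (G.degree_pos_iff_exists_adj v).2 ⟨u, (hadj v u).2 hi.symm⟩
  · rw [degree_eq_card_sub_card_fiber hadj, degree_eq_card_sub_card_fiber hadj]
    linear_combination -hcard _ _ ((hadj u v).1 huv)

lemma card_fiber_eq_of_mulVec_eq_smul [Nonempty V] (hf : Function.Surjective f)
    (hadj : ∀ u v, G.Adj u v ↔ f u ≠ f v) (hι : 2 < Fintype.card ι) {x : V → ℝ}
    (hx : ∀ v, 0 < x v) (hQx : signlessLap G *ᵥ x = (2 * ∑ v, cliqueWeight G v) • x) (i : ι) :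
    (#{v | f v = i} : ℝ) = Fintype.card V / Fintype.card ι := by
  have hX : 0 < ∑ v, x v := sum_pos (fun v _ => hx v) univ_nonempty
  have hc (i : ι) : (0 : ℝ) < #{v | f v = i} := Nat.cast_pos.2 (card_fiber_pos hf i)
  have hι' : (2 : ℝ) < Fintype.card ι := by exact_mod_cast hι
  have hα : 0 < 1 - 2 / (Fintype.card ι : ℝ) := sub_pos.2 ((div_lt_one (by linarith)).2 hι')
  have hratio (i : ι) : (#{v | f v = i} : ℝ) /
      ((1 - 2 / (Fintype.card ι : ℝ)) * Fintype.card V + 2 * #{v | f v = i}) =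
        (∑ v with f v = i, x v) / ∑ v, x v := by
    have hci := hc i
    rw [div_eq_div_iff (by positivity) hX.ne', ← sum_fiber_mul_eq hadj hQx,
      two_mul_sum_cliqueWeight hf hadj]
    ring
  have hsum : ∑ i, (#{v | f v = i} : ℝ) /
      ((1 - 2 / (Fintype.card ι : ℝ)) * Fintype.card V + 2 * #{v | f v = i}) = 1 := by
    simp only [hratio]
    rw [← sum_div, sum_fiberwise, div_self hX.ne']
  have h := eq_sum_div_card_of_sum_div_eq_one (s := univ) (w := fun i => (#{v | f v = i} : ℝ))
    (fun i _ => hc i) hι (by rwa [sum_card_fiber, Finset.card_univ]) (mem_univ i)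
  rwa [sum_card_fiber, Finset.card_univ] at h

end CompleteMultipartite

/-- Equality in the vertex-localized `Q`-index bound holds iff `G` is complete bipartite
(when `ω = 2`) or a regular complete `ω`-partite graph (when `ω ≥ 3`). -/
theorem stmt3 {V : Type*} [Fintype V] [DecidableEq V]
    (G : SimpleGraph V) (hcard : 2 ≤ Fintype.card V) (hconn : G.Connected) :
    qIndex G = 2 * ∑ v, (1 - 1 / (cliqueAt G v : ℝ)) ↔
      ((G.cliqueNum = 2 ∧ ∃ f : V → Fin 2, Function.Surjective f ∧
          ∀ u v, G.Adj u v ↔ f u ≠ f v) ∨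
       (3 ≤ G.cliqueNum ∧ ∃ f : V → Fin G.cliqueNum, Function.Surjective f ∧
          (∀ u v, G.Adj u v ↔ f u ≠ f v) ∧
          ∀ i j : Fin G.cliqueNum,
            (Finset.univ.filter fun v => f v = i).card
              = (Finset.univ.filter fun v => f v = j).card)) := by
  have : Nontrivial V := Fintype.one_lt_card_iff_nontrivial.1 hcard
  have hG := hconn.preconnected.exists_adj_of_nontrivial
  change qIndex G = 2 * ∑ v, cliqueWeight G v ↔ _
  constructor
  · intro hq
    obtain ⟨x, hx, hQx⟩ := exists_pos_signlessLap_mulVec_eq_qIndex_smul hconn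
    rw [hq] at hQx
    obtain ⟨f, hf, hadj⟩ := exists_surjective_adj_iff_ne
      (isCompleteMultipartite_of_mulVec_eq_smul hG hx hQx)
    rcases (two_le_cliqueNum (hG (Classical.arbitrary V)).choose_spec).eq_or_lt with h2 | h3
    · exact .inl ⟨h2.symm, h2 ▸ ⟨f, hf, hadj⟩⟩
    · have hfiber := card_fiber_eq_of_mulVec_eq_smul hf hadj (by rwa [Fintype.card_fin]) hx hQx
      exact .inr ⟨h3, f, hf, hadj, fun i j => by exact_mod_cast (hfiber i).trans (hfiber j).symm⟩
  · rintro (⟨-, f, hf, hadj⟩ | ⟨h3, f, hf, hadj, heq⟩)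
    · exact qIndex_eq_of_card_fiber_add_card_fiber hf hadj fun i j =>
        card_fiber_add_card_fiber_of_card_eq_two (Fintype.card_fin 2) f
    · have : Nontrivial (Fin G.cliqueNum) := Fin.nontrivial_iff_two_le.2 (by lia)
      refine qIndex_eq_of_card_fiber_add_card_fiber hf hadj fun i j _ => ?_
      rw [card_fiber_eq_of_forall_card_fiber_eq heq, card_fiber_eq_of_forall_card_fiber_eq heq]
      ring
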